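/- arXiv:2401.17516 — 3 statements merged into one kernel-verified Lean document; each statement's English description precedes it below -/
import Mathlib

section
/- Let C be an abelian category with enough projectives and injectives, let X ⊆ C be an (n+2)-rigid precovering subcategory (i.e. Ext^i(X, X') = 0 for all X, X' ∈ X and 1 ≤ i ≤ n+1), and suppose every projective object P of C satisfies Ext^{≤ n+1}(X, P) = 0. If 0 → A → Y → C' → 0 is a short exact sequence where Y → C' is a right add(X ∪ Proj(C))-approximation of C' and Ext^i(X, C') = 0 for all X ∈ X and 1 ≤ i ≤ n, then Ext^i(X, A) = 0 for all X ∈ X and 1 ≤ i ≤ n+1. -/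
open CategoryTheory CategoryTheory.Limits CategoryTheory.Abelian

universe w v u

variable {C : Type u} [Category.{v} C] [Abelian C] [HasExt.{w} C]

/-- The right orthogonal `X^{⊥_{≤ m}}`: objects `N` with `Ext^i(A, N) = 0` for all
`A ∈ X` and `1 ≤ i ≤ m`. -/
def rightPerpLE (X : Set C) (m : ℕ) : Set C :=
  {N | ∀ A ∈ X, ∀ i : ℕ, 1 ≤ i → i ≤ m → Subsingleton (Abelian.Ext A N i)}

/-- The left orthogonal `^{⊥_{≤ m}}X`. -/
def leftPerpLE (X : Set C) (m : ℕ) : Set C :=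
  {M | ∀ A ∈ X, ∀ i : ℕ, 1 ≤ i → i ≤ m → Subsingleton (Abelian.Ext M A i)}

/-- `X` is `m+1`-rigid: `Ext^i(X, X') = 0` for all `X, X' ∈ X`, `1 ≤ i ≤ m`. -/
def IsRigidLE (X : Set C) (m : ℕ) : Prop :=
  ∀ A ∈ X, ∀ B ∈ X, ∀ i : ℕ, 1 ≤ i → i ≤ m → Subsingleton (Abelian.Ext A B i)

/-- `g : A ⟶ M` is a right `X`-approximation (an `X`-precover) of `M`. -/
def IsPrecover (X : Set C) {A M : C} (g : A ⟶ M) : Prop :=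
  A ∈ X ∧ ∀ A' ∈ X, ∀ h : A' ⟶ M, ∃ t : A' ⟶ A, t ≫ g = h

/-- `f : M ⟶ A` is a left `X`-approximation (an `X`-preenvelope) of `M`. -/
def IsPreenvelope (X : Set C) {A M : C} (f : M ⟶ A) : Prop :=
  A ∈ X ∧ ∀ A' ∈ X, ∀ h : M ⟶ A', ∃ t : A ⟶ A', f ≫ t = h

/-- `X` is precovering in the full subcategory `D`. -/
def IsPrecoveringIn (D X : Set C) : Prop :=
  ∀ M ∈ D, ∃ (A : C) (g : A ⟶ M), IsPrecover X g

/-- `X` is preenveloping in the full subcategory `D`. -/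
def IsPreenvelopingIn (D X : Set C) : Prop :=
  ∀ M ∈ D, ∃ (A : C) (f : M ⟶ A), IsPreenvelope X f

/-- `addClosure S` is the closure of `S` under finite direct sums and direct summands. -/
inductive addClosure (S : Set C) : C → Prop
  | of {A : C} (h : A ∈ S) : addClosure S A
  | zero (O : C) (h : IsZero O) : addClosure S O
  | biprod {A B : C} : addClosure S A → addClosure S B → addClosure S (A ⊞ B)
  | retract {A B : C} (i : A ⟶ B) (r : B ⟶ A) (hir : i ≫ r = 𝟙 A) :
      addClosure S B → addClosure S A

/-- The class of projective objects of `C`, as a set. -/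
def projSet : Set C := {P | Projective P}

/-- The class of injective objects of `C`, as a set. -/
def injSet : Set C := {I | Injective I}

/-- The projective objects of an extension-closed subcategory `R` (with the exact structure
inherited from `C`): objects `P ∈ R` with `Ext^1(P, N) = 0` (computed in `C`) for all `N ∈ R`. -/
def projIn (R : Set C) : Set C :=
  {P | P ∈ R ∧ ∀ N ∈ R, Subsingleton (Abelian.Ext P N 1)}

/-- The injective objects of an extension-closed subcategory `R`. -/
def injIn (R : Set C) : Set C :=
  {I | I ∈ R ∧ ∀ N ∈ R, Subsingleton (Abelian.Ext N I 1)}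

/-!
In the long exact sequence `Ext^i(D, Y) → Ext^i(D, Z) → Ext^{i+1}(D, A) → Ext^{i+1}(D, Y)` with
`D ∈ X` and `i ≤ n`, the last term vanishes because `Y` is built from objects of `X^{⊥_{≤ n+1}}`
by finite direct sums and summands. So `Ext^{i+1}(D, A) = 0` as soon as the first map is
surjective: for `i = 0` this is the approximation property, and for `i ≥ 1` its target is zero.
-/

section Ext

variable {D : C} {n : ℕ}

lemma subsingleton_ext_of_isZero {Y : C} (hY : IsZero Y) : Subsingleton (Ext D Y n) :=
  AddCommGrpCat.subsingleton_of_isZero ((extFunctorObj D n).map_isZero hY)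

lemma subsingleton_ext_biprod {A B : C} [Subsingleton (Ext D A n)] [Subsingleton (Ext D B n)] :
    Subsingleton (Ext D (A ⊞ B) n) :=
  Ext.addEquivBiprod.toEquiv.subsingleton

lemma subsingleton_ext_of_retract {A B : C} (r : Retract A B) [Subsingleton (Ext D B n)] :
    Subsingleton (Ext D A n) :=
  have hi : Function.Injective ((Ext.mk₀ r.i).postcomp D (add_zero n)) :=
    (AddCommGrpCat.mono_iff_injective (r.map (extFunctorObj D n)).i).1 inferInstance
  hi.subsingleton

lemma subsingleton_ext_of_addClosure {S : Set C} (hS : ∀ B ∈ S, Subsingleton (Ext D B n))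
    {Y : C} (hY : addClosure S Y) : Subsingleton (Ext D Y n) := by
  induction hY with
  | of hB => exact hS _ hB
  | zero O hO => exact subsingleton_ext_of_isZero hO
  | biprod _ _ _ _ => exact subsingleton_ext_biprod
  | retract i r hir _ _ => exact subsingleton_ext_of_retract ⟨i, r, hir⟩

lemma surjective_postcomp_mk₀_of_forall_exists_lift {Y Z : C} {g : Y ⟶ Z}
    (hg : ∀ h : D ⟶ Z, ∃ t : D ⟶ Y, t ≫ g = h) :
    Function.Surjective ((Ext.mk₀ g).postcomp D (add_zero 0)) := by
  intro z
  obtain ⟨h, rfl⟩ := (Ext.mk₀_bijective D Z).2 z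
  obtain ⟨t, rfl⟩ := hg h
  exact ⟨Ext.mk₀ t, Ext.mk₀_comp_mk₀ t g⟩

lemma subsingleton_ext_succ_of_surjective_postcomp {T : ShortComplex C} (hT : T.ShortExact)
    (hg : Function.Surjective ((Ext.mk₀ T.g).postcomp D (add_zero n)))
    [Subsingleton (Ext D T.X₂ (n + 1))] : Subsingleton (Ext D T.X₁ (n + 1)) := by
  refine subsingleton_of_forall_eq 0 fun e ↦ ?_
  obtain ⟨z, rfl⟩ := Ext.covariant_sequence_exact₁ D hT e (Subsingleton.elim _ _) rfl
  obtain ⟨y, rfl⟩ := hg z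
  calc (y.comp (Ext.mk₀ T.g) (add_zero n)).comp hT.extClass rfl
      = y.comp ((Ext.mk₀ T.g).comp hT.extClass (zero_add 1)) rfl :=
        Ext.comp_assoc_of_second_deg_zero ..
    _ = 0 := by rw [hT.comp_extClass, Ext.comp_zero]

end Ext

section RightPerp

variable {X S : Set C} {n : ℕ}

lemma isRigidLE_iff_subset_rightPerpLE : IsRigidLE X n ↔ X ⊆ rightPerpLE X n :=
  ⟨fun h B hB A hA ↦ h A hA B hB, fun h A hA _ hB ↦ h hB A hA⟩

lemma addClosure_subset_rightPerpLE (hS : S ⊆ rightPerpLE X n) :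
    {Y | addClosure S Y} ⊆ rightPerpLE X n :=
  fun _ hY D hD i hi hin ↦
    subsingleton_ext_of_addClosure (fun _ hB ↦ hS hB D hD i hi hin) hY

lemma mem_rightPerpLE_succ_of_shortExact {T : ShortComplex C} (hT : T.ShortExact)
    (hlift : ∀ D ∈ X, ∀ h : D ⟶ T.X₃, ∃ t : D ⟶ T.X₂, t ≫ T.g = h)
    (h₂ : T.X₂ ∈ rightPerpLE X (n + 1)) (h₃ : T.X₃ ∈ rightPerpLE X n) :
    T.X₁ ∈ rightPerpLE X (n + 1) := by
  intro D hD i hi hin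
  obtain ⟨m, rfl⟩ := Nat.exists_eq_add_of_le' hi
  have : Subsingleton (Ext D T.X₂ (m + 1)) := h₂ D hD (m + 1) hi hin
  refine subsingleton_ext_succ_of_surjective_postcomp hT ?_
  rcases m.eq_zero_or_pos with rfl | hm
  · exact surjective_postcomp_mk₀_of_forall_exists_lift (hlift D hD)
  · have : Subsingleton (Ext D T.X₃ m) := h₃ D hD m hm (by lia)
    exact Function.surjective_to_subsingleton _

theorem stmt6_general (hXS : X ⊆ S) (hS : S ⊆ rightPerpLE X (n + 1))
    {A Y Z : C} {f : A ⟶ Y} {g : Y ⟶ Z} {w : f ≫ g = 0} (hse : (ShortComplex.mk f g w).ShortExact)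
    (happrox : IsPrecover {Y | addClosure S Y} g) (hZ : Z ∈ rightPerpLE X n) :
    A ∈ rightPerpLE X (n + 1) :=
  mem_rightPerpLE_succ_of_shortExact hse (fun D hD ↦ happrox.2 D (.of (hXS hD)))
    (addClosure_subset_rightPerpLE hS happrox.1) hZ

end RightPerp

/-- Lemma 2.6(2): if `X` is `(n+2)`-rigid and precovering with `Proj(C) ⊆ X^{⊥_{≤ n+1}}`,
and `0 ⟶ A ⟶ Y ⟶ C' ⟶ 0` is a short exact sequence where `Y ⟶ C'` is a right
`add(X ∪ Proj C)`-approximation of `C'` and `C' ∈ X^{⊥_{≤ n}}`, then `A ∈ X^{⊥_{≤ n+1}}`. -/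
theorem stmt6 [EnoughProjectives C] [EnoughInjectives C] (X : Set C) (n : ℕ)
    (hrigid : IsRigidLE X (n + 1))
    (hprec : IsPrecoveringIn (Set.univ : Set C) X)
    (hproj : ∀ P : C, Projective P → P ∈ rightPerpLE X (n + 1))
    {A Y Z : C} (f : A ⟶ Y) (g : Y ⟶ Z) (w : f ≫ g = 0)
    (hse : (ShortComplex.mk f g w).ShortExact)
    (happrox : IsPrecover (setOf (addClosure (X ∪ projSet))) g)
    (hZ : Z ∈ rightPerpLE X n) :
    A ∈ rightPerpLE X (n + 1) :=
  stmt6_general Set.subset_union_left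
    (Set.union_subset (isRigidLE_iff_subset_rightPerpLE.1 hrigid) hproj) hse happrox hZ
end

section
/- Let C be an abelian category with enough projectives and injectives and X ⊆ C an (n+2)-rigid precovering subcategory. Then Proj(C) ⊆ X^{⊥_{≤ n+1}} if and only if the class of projective objects of the exact category X^{⊥_{≤ n+1}} (with exact structure inherited from C) equals add(X ∪ Proj(C)). -/
open CategoryTheory CategoryTheory.Limits CategoryTheory.Abelian

universe w v u

variable {C : Type u} [Category.{v} C] [Abelian C] [HasExt.{w} C]

/-!
Let `P` be projective in `X^{⊥_{≤ n+1}}`, let `A ⟶ P` be an `X`-precover and `Q ⟶ P` an epimorphism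
from a projective object. Then `A ⊞ Q ⟶ P` is an epimorphism through which every morphism from `X`
to `P` factors, so the long exact `Ext`-sequences show that its kernel `K` again lies in
`X^{⊥_{≤ n+1}}`. Hence `Ext^1(P, K) = 0`, the epimorphism splits, and `P` is a summand of `A ⊞ Q`.
-/

omit [HasExt.{w} C] in
lemma addClosure.isZero_obj {D : Type*} [Category* D] [Preadditive D] [HasBinaryBiproducts D]
    (F : C ⥤ D) [F.Additive] {S : Set C} (hS : ∀ A ∈ S, IsZero (F.obj A)) {P : C}
    (hP : addClosure S P) : IsZero (F.obj P) := by
  induction hP with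
  | of hA => exact hS _ hA
  | zero O hO => exact F.map_isZero hO
  | @biprod A B _ _ ihA ihB =>
    have := preservesBinaryBiproducts_of_preservesBiproducts F
    exact ((biprod_isZero_iff _ _).2 ⟨ihA, ihB⟩).of_iso (F.mapBiprod A B)
  | retract i r hir _ ih =>
    have : IsSplitMono i := .mk' ⟨r, hir⟩
    exact .of_mono (F.map i) ih

lemma addClosure.subsingleton_ext_left {S : Set C} {N : C} {k : ℕ}
    (hS : ∀ A ∈ S, Subsingleton (Ext A N k)) {P : C} (hP : addClosure S P) :
    Subsingleton (Ext P N k) := by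
  have hzero : IsZero ((extFunctor k ⋙ (evaluation C _).obj N).rightOp.obj P) :=
    hP.isZero_obj _ fun A hA ↦ (AddCommGrpCat.isZero_of_iff_subsingleton.2 (hS A hA)).op
  exact AddCommGrpCat.isZero_of_iff_subsingleton.1 hzero.unop

lemma addClosure.subsingleton_ext_right {S : Set C} {M : C} {k : ℕ}
    (hS : ∀ A ∈ S, Subsingleton (Ext M A k)) {N : C} (hN : addClosure S N) :
    Subsingleton (Ext M N k) := by
  have hzero : IsZero ((extFunctorObj M k).obj N) :=
    hN.isZero_obj _ fun A hA ↦ AddCommGrpCat.isZero_of_iff_subsingleton.2 (hS A hA)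
  exact AddCommGrpCat.isZero_of_iff_subsingleton.1 hzero

lemma addClosure.mem_rightPerpLE {S X : Set C} {m : ℕ} (hS : S ⊆ rightPerpLE X m) {N : C}
    (hN : addClosure S N) : N ∈ rightPerpLE X m :=
  fun B hB i hi him ↦ hN.subsingleton_ext_right fun _ hA ↦ hS hA B hB i hi him

lemma addClosure.mem_projIn_rightPerpLE {S X : Set C} {m : ℕ} (hS : S ⊆ projIn (rightPerpLE X m))
    {P : C} (hP : addClosure S P) : P ∈ projIn (rightPerpLE X m) :=
  ⟨hP.mem_rightPerpLE fun _ hA ↦ (hS hA).1,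
    fun N hN ↦ hP.subsingleton_ext_left fun _ hA ↦ (hS hA).2 N hN⟩

lemma IsRigidLE.subset_rightPerpLE {X : Set C} {m : ℕ} (hX : IsRigidLE X m) :
    X ⊆ rightPerpLE X m :=
  fun B hB A hA ↦ hX A hA B hB

lemma IsRigidLE.subset_projIn_rightPerpLE {X : Set C} {n : ℕ} (hX : IsRigidLE X (n + 1)) :
    X ⊆ projIn (rightPerpLE X (n + 1)) :=
  fun A hA ↦ ⟨hX.subset_rightPerpLE hA, fun _ hN ↦ hN A hA 1 le_rfl (Nat.le_add_left 1 n)⟩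

lemma projSet_subset_projIn {R : Set C} (hR : projSet ⊆ R) : projSet ⊆ projIn R :=
  fun P (hP : Projective P) ↦ ⟨hR hP, fun N _ ↦ Ext.subsingleton_of_projective P N 0⟩

lemma addClosure_union_projSet_subset_projIn {X : Set C} {n : ℕ} (hX : IsRigidLE X (n + 1))
    (hproj : projSet ⊆ rightPerpLE X (n + 1)) :
    {P | addClosure (X ∪ projSet) P} ⊆ projIn (rightPerpLE X (n + 1)) :=
  fun _ hP ↦ addClosure.mem_projIn_rightPerpLE
    (Set.union_subset hX.subset_projIn_rightPerpLE (projSet_subset_projIn hproj)) hP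

section ShortExact

variable {S : ShortComplex C} (hS : S.ShortExact)
include hS

lemma subsingleton_ext_succ_of_comp_g_surjective {B : C} {k : ℕ}
    (hg : Function.Surjective fun x : Ext B S.X₂ k ↦ x.comp (Ext.mk₀ S.g) (add_zero k))
    (h₂ : Subsingleton (Ext B S.X₂ (k + 1))) : Subsingleton (Ext B S.X₁ (k + 1)) := by
  refine subsingleton_of_forall_eq 0 fun x₁ ↦ ?_
  obtain ⟨x₃, rfl⟩ := Ext.covariant_sequence_exact₁ B hS x₁ (Subsingleton.elim _ _) rfl
  obtain ⟨x₂, rfl⟩ := hg x₃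
  simp only [Ext.comp_assoc_of_second_deg_zero, hS.comp_extClass, Ext.comp_zero]

lemma isSplitEpi_of_subsingleton_ext_one (h : Subsingleton (Ext S.X₃ S.X₁ 1)) :
    IsSplitEpi S.g := by
  obtain ⟨x, hx⟩ := Ext.covariant_sequence_exact₃ S.X₃ hS (Ext.mk₀ (𝟙 S.X₃)) (zero_add 1)
    (Subsingleton.elim _ _)
  obtain ⟨s, rfl⟩ := (Ext.mk₀_bijective S.X₃ S.X₂).2 x
  rw [Ext.mk₀_comp_mk₀] at hx
  exact .mk' ⟨s, (Ext.mk₀_bijective S.X₃ S.X₃).1 hx⟩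

lemma mem_rightPerpLE_of_shortExact {X : Set C} {m : ℕ}
    (hlift : ∀ B ∈ X, ∀ f : B ⟶ S.X₃, ∃ t : B ⟶ S.X₂, t ≫ S.g = f)
    (h₂ : S.X₂ ∈ rightPerpLE X (m + 1)) (h₃ : S.X₃ ∈ rightPerpLE X m) :
    S.X₁ ∈ rightPerpLE X (m + 1) := by
  rintro B hB (_ | k) hi him
  · contradiction
  refine subsingleton_ext_succ_of_comp_g_surjective hS (fun x₃ ↦ ?_) (h₂ B hB _ hi him)
  obtain rfl | hk := Nat.eq_zero_or_pos k
  · obtain ⟨f, rfl⟩ := (Ext.mk₀_bijective B S.X₃).2 x₃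
    obtain ⟨t, rfl⟩ := hlift B hB f
    exact ⟨Ext.mk₀ t, Ext.mk₀_comp_mk₀ t S.g⟩
  · have := h₃ B hB k hk (Nat.le_of_succ_le_succ him)
    exact ⟨0, Subsingleton.elim _ _⟩

end ShortExact

lemma rightPerpLE_antitone (X : Set C) : Antitone (rightPerpLE X) :=
  fun _ _ hmn _ hN A hA i hi him ↦ hN A hA i hi (him.trans hmn)

lemma isSplitEpi_of_mem_projIn_rightPerpLE {X : Set C} {n : ℕ} {M P : C} (p : M ⟶ P) [Epi p]
    (hlift : ∀ B ∈ X, ∀ f : B ⟶ P, ∃ t : B ⟶ M, t ≫ p = f)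
    (hM : M ∈ rightPerpLE X (n + 1)) (hP : P ∈ projIn (rightPerpLE X (n + 1))) :
    IsSplitEpi p := by
  have hS : (ShortComplex.kernelSequence p).ShortExact :=
    .mk' (ShortComplex.kernelSequence_exact p) inferInstance ‹Epi p›
  have hker : kernel p ∈ rightPerpLE X (n + 1) :=
    mem_rightPerpLE_of_shortExact hS hlift hM (rightPerpLE_antitone X n.le_succ hP.1)
  exact isSplitEpi_of_subsingleton_ext_one hS (hP.2 _ hker)

lemma IsPrecover.addClosure_of_mem_projIn [EnoughProjectives C] {X : Set C} {n : ℕ} {A P : C}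
    {g : A ⟶ P} (hg : IsPrecover X g) (hX : IsRigidLE X (n + 1))
    (hproj : projSet ⊆ rightPerpLE X (n + 1)) (hP : P ∈ projIn (rightPerpLE X (n + 1))) :
    addClosure (X ∪ projSet) P := by
  let p : A ⊞ Projective.over P ⟶ P := biprod.desc g (Projective.π P)
  have hM : addClosure (X ∪ projSet) (A ⊞ Projective.over P) :=
    .biprod (.of (.inl hg.1)) (.of (.inr (Projective.projective_over P)))
  have hlift : ∀ B ∈ X, ∀ f : B ⟶ P, ∃ t, t ≫ p = f := by
    intro B hB f
    obtain ⟨t, rfl⟩ := hg.2 B hB f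
    exact ⟨t ≫ biprod.inl, by simp [p]⟩
  have : IsSplitEpi p := isSplitEpi_of_mem_projIn_rightPerpLE p hlift
    (addClosure_union_projSet_subset_projIn hX hproj hM).1 hP
  exact .retract (section_ p) p (IsSplitEpi.id p) hM

theorem stmt7_general [EnoughProjectives C] (X : Set C) (n : ℕ) (hrigid : IsRigidLE X (n + 1))
    (hprec : IsPrecoveringIn (rightPerpLE X (n + 1)) X) :
    projSet ⊆ rightPerpLE X (n + 1) ↔
      projIn (rightPerpLE X (n + 1)) = {P | addClosure (X ∪ projSet) P} := by
  refine ⟨fun hproj ↦ Set.Subset.antisymm (fun P hP ↦ ?_)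
    (addClosure_union_projSet_subset_projIn hrigid hproj), fun heq P hP ↦ ?_⟩
  · obtain ⟨A, g, hg⟩ := hprec P hP.1
    exact hg.addClosure_of_mem_projIn hrigid hproj hP
  · have hmem : P ∈ projIn (rightPerpLE X (n + 1)) := heq ▸ addClosure.of (.inr hP)
    exact hmem.1

/-- Proposition 2.7: for an `(n+2)`-rigid precovering subcategory `X` of `C`,
`Proj(C) ⊆ X^{⊥_{≤ n+1}}` if and only if the projective objects of the exact category
`X^{⊥_{≤ n+1}}` are exactly `add(X ∪ Proj C)`. -/
theorem stmt7 [EnoughProjectives C] [EnoughInjectives C] (X : Set C) (n : ℕ)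
    (hrigid : IsRigidLE X (n + 1))
    (hprec : IsPrecoveringIn (Set.univ : Set C) X) :
    projSet ⊆ rightPerpLE X (n + 1) ↔
      projIn (rightPerpLE X (n + 1)) = setOf (addClosure (X ∪ projSet)) :=
  stmt7_general X n hrigid fun M _ ↦ hprec M (Set.mem_univ M)
end

section
/- Let C be an abelian category with enough projectives and injectives, X ⊆ C an (n+2)-rigid functorially finite subcategory satisfying X^{⊥_{≤ n+1}} = ^{⊥_{≤ n+1}}X. Then the reduction R = X^{⊥_{≤ n+1}} is an exact category with enough projectives and enough injectives, given respectively by add(X ∪ Proj(C)) and add(X ∪ Inj(C)). -/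
open CategoryTheory CategoryTheory.Limits CategoryTheory.Abelian

universe w v u

variable {C : Type u} [Category.{v} C] [Abelian C] [HasExt.{w} C]

/-!
Write `R = X^{⊥_{≤ n+1}}`. Since `R = ^{⊥_{≤ n+1}}X`, the objects of `X ∪ Proj C` lie in `R` and are
projective there, and this passes to `add(X ∪ Proj C)`. For `N ∈ R`, an `X`-precover `A ⟶ N` and an
epimorphism `Q ⟶ N` from a projective of `C` combine to an epimorphism `A ⊞ Q ⟶ N` through which
all maps from `X` factor. This factorization kills `Ext¹(X, K)` for its kernel `K` (Wakamatsu's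
argument), and the higher `Ext` groups vanish by dimension shifting, so `K ∈ R`. If `N` is itself
projective in `R`, the epimorphism splits. The injective side is dual, with `R` regarded as a left
orthogonal.
-/

section ExtVanishing

variable {S : ShortComplex C} {A B Z : C} {i : ℕ}

theorem subsingleton_ext_X₂_of_shortExact (hS : S.ShortExact)
    (h₁ : Subsingleton (Abelian.Ext Z S.X₁ i)) (h₃ : Subsingleton (Abelian.Ext Z S.X₃ i)) :
    Subsingleton (Abelian.Ext Z S.X₂ i) := by
  refine subsingleton_of_forall_eq 0 fun x => ?_
  obtain ⟨y, rfl⟩ := Ext.covariant_sequence_exact₂ Z hS x (Subsingleton.elim _ _)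
  rw [Subsingleton.elim y 0, Ext.zero_comp]

theorem subsingleton_ext_of_retract_right (h : Retract A B)
    (hB : Subsingleton (Abelian.Ext Z B i)) : Subsingleton (Abelian.Ext Z A i) := by
  refine subsingleton_of_forall_eq 0 fun x => ?_
  rw [← Ext.comp_mk₀_id x, ← h.retract, ← Ext.mk₀_comp_mk₀,
    ← Ext.comp_assoc_of_third_deg_zero,
    Subsingleton.elim (x.comp (Ext.mk₀ h.i) (add_zero i)) 0, Ext.zero_comp]

theorem subsingleton_ext_of_retract_left (h : Retract A B)
    (hB : Subsingleton (Abelian.Ext B Z i)) : Subsingleton (Abelian.Ext A Z i) := by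
  refine subsingleton_of_forall_eq 0 fun x => ?_
  rw [← Ext.mk₀_id_comp x, ← h.retract, ← Ext.mk₀_comp_mk₀_assoc,
    Subsingleton.elim ((Ext.mk₀ h.r).comp x (zero_add i)) 0, Ext.comp_zero]

theorem exists_lift_of_subsingleton_ext_one (hS : S.ShortExact)
    (h : Subsingleton (Abelian.Ext Z S.X₁ 1)) (f : Z ⟶ S.X₃) : ∃ t : Z ⟶ S.X₂, t ≫ S.g = f := by
  obtain ⟨y, hy⟩ := Ext.covariant_sequence_exact₃ Z hS (Ext.mk₀ f) (zero_add 1)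
    (Subsingleton.elim _ _)
  obtain ⟨t, rfl⟩ := (Ext.mk₀_bijective _ _).2 y
  exact ⟨t, (Ext.mk₀_bijective _ _).1 (by rw [← Ext.mk₀_comp_mk₀, hy])⟩

theorem exists_desc_of_subsingleton_ext_one (hS : S.ShortExact)
    (h : Subsingleton (Abelian.Ext S.X₃ Z 1)) (f : S.X₁ ⟶ Z) : ∃ t : S.X₂ ⟶ Z, S.f ≫ t = f := by
  obtain ⟨y, hy⟩ := Ext.contravariant_sequence_exact₁ hS Z (Ext.mk₀ f) (add_zero 1)
    (Subsingleton.elim _ _)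
  obtain ⟨t, rfl⟩ := (Ext.mk₀_bijective _ _).2 y
  exact ⟨t, (Ext.mk₀_bijective _ _).1 (by rw [← Ext.mk₀_comp_mk₀, hy])⟩

theorem subsingleton_ext_one_of_forall_exists_lift (hS : S.ShortExact)
    (h₂ : Subsingleton (Abelian.Ext Z S.X₂ 1)) (hlift : ∀ f : Z ⟶ S.X₃, ∃ t, t ≫ S.g = f) :
    Subsingleton (Abelian.Ext Z S.X₁ 1) := by
  refine subsingleton_of_forall_eq 0 fun x => ?_
  obtain ⟨y, rfl⟩ := Ext.covariant_sequence_exact₁ Z hS x (Subsingleton.elim _ _) (zero_add 1)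
  obtain ⟨f, rfl⟩ := (Ext.mk₀_bijective _ _).2 y
  obtain ⟨t, rfl⟩ := hlift f
  rw [← Ext.mk₀_comp_mk₀, Ext.comp_assoc_of_second_deg_zero, hS.comp_extClass, Ext.comp_zero]

theorem subsingleton_ext_one_of_forall_exists_desc (hS : S.ShortExact)
    (h₂ : Subsingleton (Abelian.Ext S.X₂ Z 1)) (hdesc : ∀ f : S.X₁ ⟶ Z, ∃ t, S.f ≫ t = f) :
    Subsingleton (Abelian.Ext S.X₃ Z 1) := by
  refine subsingleton_of_forall_eq 0 fun x => ?_
  obtain ⟨y, rfl⟩ := Ext.contravariant_sequence_exact₃ hS Z x (Subsingleton.elim _ _) (add_zero 1)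
  obtain ⟨f, rfl⟩ := (Ext.mk₀_bijective _ _).2 y
  obtain ⟨t, rfl⟩ := hdesc f
  rw [← Ext.mk₀_comp_mk₀, hS.extClass_comp_assoc]

theorem subsingleton_ext_succ_X₁_of_shortExact (hS : S.ShortExact)
    (h₂ : Subsingleton (Abelian.Ext Z S.X₂ (i + 1))) (h₃ : Subsingleton (Abelian.Ext Z S.X₃ i)) :
    Subsingleton (Abelian.Ext Z S.X₁ (i + 1)) := by
  refine subsingleton_of_forall_eq 0 fun x => ?_
  obtain ⟨y, rfl⟩ := Ext.covariant_sequence_exact₁ Z hS x (Subsingleton.elim _ _) rfl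
  rw [Subsingleton.elim y 0, Ext.zero_comp]

theorem subsingleton_ext_succ_X₃_of_shortExact (hS : S.ShortExact)
    (h₂ : Subsingleton (Abelian.Ext S.X₂ Z (i + 1))) (h₁ : Subsingleton (Abelian.Ext S.X₁ Z i)) :
    Subsingleton (Abelian.Ext S.X₃ Z (i + 1)) := by
  refine subsingleton_of_forall_eq 0 fun x => ?_
  obtain ⟨y, rfl⟩ := Ext.contravariant_sequence_exact₃ hS Z x (Subsingleton.elim _ _) (add_comm 1 i)
  rw [Subsingleton.elim y 0, Ext.comp_zero]

end ExtVanishing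

section Orthogonals

variable {X T : Set C} {m : ℕ}

theorem mem_rightPerpLE_of_injective {I : C} (hI : Injective I) : I ∈ rightPerpLE X m := by
  intro A _ i hi _
  obtain ⟨j, rfl⟩ := Nat.exists_eq_add_of_le' hi
  exact Ext.subsingleton_of_injective A I j

theorem mem_leftPerpLE_of_projective {P : C} (hP : Projective P) : P ∈ leftPerpLE X m := by
  intro A _ i hi _
  obtain ⟨j, rfl⟩ := Nat.exists_eq_add_of_le' hi
  exact Ext.subsingleton_of_projective P A j

theorem mem_rightPerpLE_of_shortExact_s10 {S : ShortComplex C} (hS : S.ShortExact)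
    (h₁ : S.X₁ ∈ rightPerpLE X m) (h₃ : S.X₃ ∈ rightPerpLE X m) : S.X₂ ∈ rightPerpLE X m :=
  fun A hA i hi him =>
    subsingleton_ext_X₂_of_shortExact hS (h₁ A hA i hi him) (h₃ A hA i hi him)

theorem mem_rightPerpLE_of_addClosure (hT : T ⊆ rightPerpLE X m) {A : C} (hA : addClosure T A) :
    A ∈ rightPerpLE X m := by
  induction hA with
  | of h => exact hT h
  | zero _ h => exact mem_rightPerpLE_of_injective h.injective
  | @biprod A B _ _ hA hB =>
    exact mem_rightPerpLE_of_shortExact_s10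
      (ShortComplex.Splitting.ofHasBinaryBiproduct A B).shortExact hA hB
  | retract i r hir _ hB =>
    exact fun Z hZ k hk hkm => subsingleton_ext_of_retract_right ⟨i, r, hir⟩ (hB Z hZ k hk hkm)

theorem mem_leftPerpLE_of_addClosure (hT : T ⊆ leftPerpLE X m) {A : C} (hA : addClosure T A) :
    A ∈ leftPerpLE X m := by
  induction hA with
  | of h => exact hT h
  | zero _ h => exact mem_leftPerpLE_of_projective h.projective
  | biprod _ _ hA hB =>
    intro Z hZ k hk hkm
    have := hA Z hZ k hk hkm
    have := hB Z hZ k hk hkm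
    exact Ext.biprodAddEquiv.toEquiv.subsingleton
  | retract i r hir _ hB =>
    exact fun Z hZ k hk hkm => subsingleton_ext_of_retract_left ⟨i, r, hir⟩ (hB Z hZ k hk hkm)

theorem mem_rightPerpLE_of_forall_exists_lift {S : ShortComplex C} (hS : S.ShortExact)
    (h₂ : S.X₂ ∈ rightPerpLE X m) (h₃ : S.X₃ ∈ rightPerpLE X m)
    (hlift : ∀ A ∈ X, ∀ f : A ⟶ S.X₃, ∃ t, t ≫ S.g = f) : S.X₁ ∈ rightPerpLE X m
  | A, hA, 1, hi, him =>
    subsingleton_ext_one_of_forall_exists_lift hS (h₂ A hA 1 hi him) (hlift A hA)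
  | A, hA, i + 2, hi, him =>
    subsingleton_ext_succ_X₁_of_shortExact hS (h₂ A hA (i + 2) hi him)
      (h₃ A hA (i + 1) (by omega) (by omega))

theorem mem_leftPerpLE_of_forall_exists_desc {S : ShortComplex C} (hS : S.ShortExact)
    (h₁ : S.X₁ ∈ leftPerpLE X m) (h₂ : S.X₂ ∈ leftPerpLE X m)
    (hdesc : ∀ A ∈ X, ∀ f : S.X₁ ⟶ A, ∃ t, S.f ≫ t = f) : S.X₃ ∈ leftPerpLE X m
  | A, hA, 1, hi, him =>
    subsingleton_ext_one_of_forall_exists_desc hS (h₂ A hA 1 hi him) (hdesc A hA)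
  | A, hA, i + 2, hi, him =>
    subsingleton_ext_succ_X₃_of_shortExact hS (h₂ A hA (i + 2) hi him)
      (h₁ A hA (i + 1) (by omega) (by omega))

end Orthogonals

section Generation

variable {R T : Set C}

/-- `Q` is generating in the extension-closed subcategory `R`: every object of `R` is the end term
of a conflation of `R` (a short exact sequence of `C` with all terms in `R`) with middle term in
`Q`. For `Q = projIn R` this says that `R` has enough projectives. The middle term lies in `R`
automatically, because `R` is extension-closed. -/
def IsGeneratingIn (R Q : Set C) : Prop :=
  ∀ N ∈ R, ∃ (A P : C) (i : A ⟶ P) (p : P ⟶ N) (w : i ≫ p = 0),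
    (ShortComplex.mk i p w).ShortExact ∧ A ∈ R ∧ P ∈ Q

/-- The dual of `IsGeneratingIn`: every object of `R` is the initial term of a conflation of `R`
with middle term in `Q`. For `Q = injIn R` this says that `R` has enough injectives. -/
def IsCogeneratingIn (R Q : Set C) : Prop :=
  ∀ N ∈ R, ∃ (I B : C) (i : N ⟶ I) (p : I ⟶ B) (w : i ≫ p = 0),
    (ShortComplex.mk i p w).ShortExact ∧ B ∈ R ∧ I ∈ Q

theorem projIn_eq_inter_leftPerpLE (R : Set C) : projIn R = R ∩ leftPerpLE R 1 := by
  ext P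
  refine and_congr_right fun _ => forall₂_congr fun N _ => ?_
  exact ⟨fun h i hi hi' => le_antisymm hi' hi ▸ h, fun h => h 1 le_rfl le_rfl⟩

theorem injIn_eq_inter_rightPerpLE (R : Set C) : injIn R = R ∩ rightPerpLE R 1 := by
  ext I
  refine and_congr_right fun _ => forall₂_congr fun N _ => ?_
  exact ⟨fun h i hi hi' => le_antisymm hi' hi ▸ h, fun h => h 1 le_rfl le_rfl⟩

theorem projIn_eq_addClosure (hgen : IsGeneratingIn R {A | addClosure T A})
    (hT : {A | addClosure T A} ⊆ projIn R) : projIn R = {A | addClosure T A} := by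
  refine Set.Subset.antisymm (fun P hP => ?_) hT
  obtain ⟨A, Q, i, p, w, hS, hA, hQ⟩ := hgen P hP.1
  obtain ⟨s, hs⟩ := exists_lift_of_subsingleton_ext_one hS (hP.2 A hA) (𝟙 P)
  exact .retract s p hs hQ

theorem injIn_eq_addClosure (hcogen : IsCogeneratingIn R {A | addClosure T A})
    (hT : {A | addClosure T A} ⊆ injIn R) : injIn R = {A | addClosure T A} := by
  refine Set.Subset.antisymm (fun I hI => ?_) hT
  obtain ⟨J, B, i, p, w, hS, hB, hJ⟩ := hcogen I hI.1
  obtain ⟨r, hr⟩ := exists_desc_of_subsingleton_ext_one hS (hI.2 B hB) (𝟙 I)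
  exact .retract i r hr hJ

end Generation

section Reduction

variable {X T : Set C} {m : ℕ}

theorem addClosure_subset_projIn_rightPerpLE (hT : T ⊆ projIn (rightPerpLE X m)) :
    {A | addClosure T A} ⊆ projIn (rightPerpLE X m) := by
  rw [projIn_eq_inter_leftPerpLE, Set.subset_inter_iff] at hT ⊢
  exact ⟨fun _ => mem_rightPerpLE_of_addClosure hT.1, fun _ => mem_leftPerpLE_of_addClosure hT.2⟩

theorem addClosure_subset_injIn_leftPerpLE (hT : T ⊆ injIn (leftPerpLE X m)) :
    {A | addClosure T A} ⊆ injIn (leftPerpLE X m) := by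
  rw [injIn_eq_inter_rightPerpLE, Set.subset_inter_iff] at hT ⊢
  exact ⟨fun _ => mem_leftPerpLE_of_addClosure hT.1, fun _ => mem_rightPerpLE_of_addClosure hT.2⟩

theorem union_projSet_subset_projIn (hm : 1 ≤ m) (hrigid : IsRigidLE X m)
    (hproj : projSet ⊆ rightPerpLE X m) : X ∪ projSet ⊆ projIn (rightPerpLE X m) := by
  rintro P (hP | hP)
  · exact ⟨fun A hA => hrigid A hA P hP, fun N hN => hN P hP 1 le_rfl hm⟩
  · exact ⟨hproj hP, fun N hN => mem_leftPerpLE_of_projective hP N hN 1 le_rfl le_rfl⟩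

theorem union_injSet_subset_injIn (hm : 1 ≤ m) (hrigid : IsRigidLE X m)
    (hinj : injSet ⊆ leftPerpLE X m) : X ∪ injSet ⊆ injIn (leftPerpLE X m) := by
  rintro I (hI | hI)
  · exact ⟨hrigid I hI, fun N hN => hN I hI 1 le_rfl hm⟩
  · exact ⟨hinj hI, fun N hN => mem_rightPerpLE_of_injective hI N hN 1 le_rfl le_rfl⟩

theorem isGeneratingIn_addClosure_union_projSet [EnoughProjectives C]
    (hX : X ∪ projSet ⊆ rightPerpLE X m) (hprec : IsPrecoveringIn (rightPerpLE X m) X) :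
    IsGeneratingIn (rightPerpLE X m) {P | addClosure (X ∪ projSet) P} := by
  intro N hN
  obtain ⟨A, g, hA, hg⟩ := hprec N hN
  let p : A ⊞ Projective.over N ⟶ N := biprod.desc g (Projective.π N)
  have hS : (ShortComplex.mk (kernel.ι p) p (kernel.condition p)).ShortExact :=
    { exact := ShortComplex.exact_of_f_is_kernel _ (kernelIsKernel p) }
  have hadd : addClosure (X ∪ projSet) (A ⊞ Projective.over N) :=
    .biprod (.of (.inl hA)) (.of (.inr (Projective.projective_over N)))
  refine ⟨_, _, _, _, _, hS, ?_, hadd⟩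
  refine mem_rightPerpLE_of_forall_exists_lift hS (mem_rightPerpLE_of_addClosure hX hadd) hN ?_
  intro B hB f
  obtain ⟨t, ht⟩ := hg B hB f
  exact ⟨t ≫ biprod.inl, by simp [p, ht]⟩

theorem isCogeneratingIn_addClosure_union_injSet [EnoughInjectives C]
    (hX : X ∪ injSet ⊆ leftPerpLE X m) (hpreenv : IsPreenvelopingIn (leftPerpLE X m) X) :
    IsCogeneratingIn (leftPerpLE X m) {I | addClosure (X ∪ injSet) I} := by
  intro N hN
  obtain ⟨A, g, hA, hg⟩ := hpreenv N hN
  let j : N ⟶ A ⊞ Injective.under N := biprod.lift g (Injective.ι N)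
  have hS : (ShortComplex.mk j (cokernel.π j) (cokernel.condition j)).ShortExact :=
    { exact := ShortComplex.exact_of_g_is_cokernel _ (cokernelIsCokernel j) }
  have hadd : addClosure (X ∪ injSet) (A ⊞ Injective.under N) :=
    .biprod (.of (.inl hA)) (.of (.inr (Injective.injective_under N)))
  refine ⟨_, _, _, _, _, hS, ?_, hadd⟩
  refine mem_leftPerpLE_of_forall_exists_desc hS hN (mem_leftPerpLE_of_addClosure hX hadd) ?_
  intro B hB f
  obtain ⟨t, ht⟩ := hg B hB f
  exact ⟨biprod.fst ≫ t, by simp [j, ht]⟩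

theorem projIn_rightPerpLE_eq_addClosure_and_isGeneratingIn [EnoughProjectives C] (hm : 1 ≤ m)
    (hrigid : IsRigidLE X m) (hproj : projSet ⊆ rightPerpLE X m)
    (hprec : IsPrecoveringIn (rightPerpLE X m) X) :
    projIn (rightPerpLE X m) = {P | addClosure (X ∪ projSet) P} ∧
      IsGeneratingIn (rightPerpLE X m) (projIn (rightPerpLE X m)) := by
  have hX := union_projSet_subset_projIn hm hrigid hproj
  have hgen := isGeneratingIn_addClosure_union_projSet (fun _ hP => (hX hP).1) hprec
  have heq := projIn_eq_addClosure hgen (addClosure_subset_projIn_rightPerpLE hX)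
  exact ⟨heq, heq ▸ hgen⟩

theorem injIn_leftPerpLE_eq_addClosure_and_isCogeneratingIn [EnoughInjectives C] (hm : 1 ≤ m)
    (hrigid : IsRigidLE X m) (hinj : injSet ⊆ leftPerpLE X m)
    (hpreenv : IsPreenvelopingIn (leftPerpLE X m) X) :
    injIn (leftPerpLE X m) = {I | addClosure (X ∪ injSet) I} ∧
      IsCogeneratingIn (leftPerpLE X m) (injIn (leftPerpLE X m)) := by
  have hX := union_injSet_subset_injIn hm hrigid hinj
  have hcogen := isCogeneratingIn_addClosure_union_injSet (fun _ hI => (hX hI).1) hpreenv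
  have heq := injIn_eq_addClosure hcogen (addClosure_subset_injIn_leftPerpLE hX)
  exact ⟨heq, heq ▸ hcogen⟩

end Reduction

theorem stmt10_general [EnoughProjectives C] [EnoughInjectives C] (X : Set C) (n : ℕ)
    (hrigid : IsRigidLE X (n + 1))
    (hprec : IsPrecoveringIn (rightPerpLE X (n + 1)) X)
    (hpreenv : IsPreenvelopingIn (rightPerpLE X (n + 1)) X)
    (heq : rightPerpLE X (n + 1) = leftPerpLE X (n + 1)) :
    (∀ {A B Z : C} (f : A ⟶ B) (g : B ⟶ Z) (w : f ≫ g = 0),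
      (ShortComplex.mk f g w).ShortExact → A ∈ rightPerpLE X (n + 1) →
        Z ∈ rightPerpLE X (n + 1) → B ∈ rightPerpLE X (n + 1)) ∧
    projIn (rightPerpLE X (n + 1)) = {P | addClosure (X ∪ projSet) P} ∧
    IsGeneratingIn (rightPerpLE X (n + 1)) (projIn (rightPerpLE X (n + 1))) ∧
    injIn (rightPerpLE X (n + 1)) = {I | addClosure (X ∪ injSet) I} ∧
    IsCogeneratingIn (rightPerpLE X (n + 1)) (injIn (rightPerpLE X (n + 1))) := by
  have hproj : projSet ⊆ rightPerpLE X (n + 1) :=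
    heq ▸ fun _ hP => mem_leftPerpLE_of_projective hP
  have hinj : injSet ⊆ leftPerpLE X (n + 1) :=
    heq ▸ fun _ hI => mem_rightPerpLE_of_injective hI
  obtain ⟨hprojIn, hgen⟩ := projIn_rightPerpLE_eq_addClosure_and_isGeneratingIn
    (Nat.le_add_left 1 n) hrigid hproj hprec
  obtain ⟨hinjIn, hcogen⟩ := injIn_leftPerpLE_eq_addClosure_and_isCogeneratingIn
    (Nat.le_add_left 1 n) hrigid hinj (heq ▸ hpreenv)
  rw [← heq] at hinjIn hcogen
  exact ⟨fun _ _ _ hS hA hZ => mem_rightPerpLE_of_shortExact_s10 hS hA hZ,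
    hprojIn, hgen, hinjIn, hcogen⟩

/-- Corollary 3.3: if `X` is `(n+2)`-rigid and functorially finite with
`X^{⊥_{≤ n+1}} = ^{⊥_{≤ n+1}}X`, then the reduction `R = X^{⊥_{≤ n+1}}` is an exact
category (it is closed under extensions) with enough projectives, given by
`add(X ∪ Proj C)`, and enough injectives, given by `add(X ∪ Inj C)`. -/
theorem stmt10 [EnoughProjectives C] [EnoughInjectives C] (X : Set C) (n : ℕ)
    (hrigid : IsRigidLE X (n + 1))
    (hprec : IsPrecoveringIn (Set.univ : Set C) X)
    (hpreenv : IsPreenvelopingIn (Set.univ : Set C) X)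
    (heq : rightPerpLE X (n + 1) = leftPerpLE X (n + 1)) :
    (∀ {A B Z : C} (f : A ⟶ B) (g : B ⟶ Z) (w : f ≫ g = 0),
      (ShortComplex.mk f g w).ShortExact → A ∈ rightPerpLE X (n + 1) →
        Z ∈ rightPerpLE X (n + 1) → B ∈ rightPerpLE X (n + 1)) ∧
    projIn (rightPerpLE X (n + 1)) = setOf (addClosure (X ∪ projSet)) ∧
    (∀ N ∈ rightPerpLE X (n + 1),
      ∃ (A P : C) (i : A ⟶ P) (p : P ⟶ N) (w : i ≫ p = 0),
        (ShortComplex.mk i p w).ShortExact ∧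
        A ∈ rightPerpLE X (n + 1) ∧ P ∈ projIn (rightPerpLE X (n + 1))) ∧
    injIn (rightPerpLE X (n + 1)) = setOf (addClosure (X ∪ injSet)) ∧
    (∀ N ∈ rightPerpLE X (n + 1),
      ∃ (I B : C) (i : N ⟶ I) (p : I ⟶ B) (w : i ≫ p = 0),
        (ShortComplex.mk i p w).ShortExact ∧
        B ∈ rightPerpLE X (n + 1) ∧ I ∈ injIn (rightPerpLE X (n + 1))) :=
  stmt10_general X n hrigid (fun N _ => hprec N trivial) (fun N _ => hpreenv N trivial) heq
end
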